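/- Let $k_1,k_2,k_3$ be real constants, $\mu>0$, and suppose $1+(k_1+k_3)\theta+k_2\theta^2>0$ for all $\theta$ in a neighborhood of $0$ in $[0,\infty)$. Let $\phi$ be a $C^\infty$ function on a neighborhood of $0$ with $\phi(0)=1$ satisfying $(1+(k_1+k_3)s^2+k_2s^4)\phi''(s)=(k_1+k_2s^2)(\phi(s)-s\phi'(s))$, and set $\sigma(x):=\tfrac{1}{2}\int_0^{x}\frac{k_2\theta+k_3}{1+(k_1+k_3)\theta+k_2\theta^2}\,d\theta$. For small $\delta\ge0$ define $L_1(\delta):=\int_0^{2\pi/\sqrt{\mu}}\frac{\phi\big(-2\mu^{-1}\delta\sin(\sqrt{\mu}\,t)\big)}{\sqrt{1+(k_1+k_3)B+k_2B^2}\;e^{\sigma(B)}}\,dt$, where $B=B(t,\delta):=4\mu^{-2}\delta^2\sin^2(\sqrt{\mu}\,t)$. Then as $\delta\to0^+$, $L_1(\delta)=\frac{2\pi}{\sqrt{\mu}}-\frac{4k_3\pi}{\mu^2\sqrt{\mu}}\,\delta^2+\frac{4(3k_3^2+2k_1k_3-2k_2)\pi}{\mu^4\sqrt{\mu}}\,\delta^4+O(\delta^6)$.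 -/

import Mathlib

open Set Topology Asymptotics

/-- The function `σ(x) = (1/2)∫₀ˣ (k₂θ+k₃)/(1+(k₁+k₃)θ+k₂θ²) dθ`. -/
noncomputable def sigmaFn (k₁ k₂ k₃ x : ℝ) : ℝ :=
  (1 / 2) * ∫ θ in (0:ℝ)..x, (k₂ * θ + k₃) / (1 + (k₁ + k₃) * θ + k₂ * θ ^ 2)

/-- `B(t,δ) = 4μ⁻²δ²sin²(√μ t)`. -/
noncomputable def Bfn (μ δ t : ℝ) : ℝ :=
  4 * δ ^ 2 / μ ^ 2 * Real.sin (Real.sqrt μ * t) ^ 2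

/-- The integral `L₁(δ)` from equation (30) of the paper. -/
noncomputable def Lone (k₁ k₂ k₃ μ : ℝ) (φ : ℝ → ℝ) (δ : ℝ) : ℝ :=
  ∫ t in (0:ℝ)..(2 * Real.pi / Real.sqrt μ),
    φ (-2 * μ⁻¹ * δ * Real.sin (Real.sqrt μ * t)) /
      (Real.sqrt (1 + (k₁ + k₃) * Bfn μ δ t + k₂ * Bfn μ δ t ^ 2) *
        Real.exp (sigmaFn k₁ k₂ k₃ (Bfn μ δ t)))

/-- Taylor expansion at `0` of a smooth function, with a big-O remainder. -/
lemma taylor_isBigO {f : ℝ → ℝ} {r : ℝ} (hr : 0 < r)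
    (hf : ContDiffOn ℝ (⊤ : ℕ∞) f (Ioo (-r) r)) (n : ℕ) :
    (fun x => f x - ∑ i ∈ Finset.range n, iteratedDeriv i f 0 / i.factorial * x ^ i)
      =O[𝓝 0] fun x => x ^ n := by
  have h0 : (0 : ℝ) ∈ Ioo (-r) r := ⟨by linarith, hr⟩
  have h := (taylor_isLittleO (convex_Ioo (-r) r) h0 (n := n)
    (hf.of_le (by exact_mod_cast le_top))).isBigO
  rw [nhdsWithin_eq_nhds.2 (Ioo_mem_nhds h0.1 h0.2)] at h
  simp only [sub_zero] at h
  have h' : (fun x : ℝ => iteratedDeriv n f 0 / n.factorial * x ^ n) =O[𝓝 0] fun x => x ^ n :=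
    (isBigO_refl _ _).const_mul_left _
  refine (h.add h').congr_left fun x => ?_
  rw [taylor_within_apply, Finset.sum_range_succ]
  have he : ∀ i, iteratedDerivWithin i f (Ioo (-r) r) 0 = iteratedDeriv i f 0 :=
    fun i => iteratedDerivWithin_of_isOpen isOpen_Ioo h0
  simp only [he, sub_zero, smul_eq_mul]
  have hs : ∀ i : ℕ, ((i.factorial : ℝ)⁻¹ * x ^ i) * iteratedDeriv i f 0
      = iteratedDeriv i f 0 / i.factorial * x ^ i := fun i => by ring
  simp only [hs]
  ring

lemma hasDerivAt_iteratedDeriv {f : ℝ → ℝ} {s : Set ℝ} (hs : IsOpen s)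
    (hf : ContDiffOn ℝ (⊤ : ℕ∞) f s) (n : ℕ) {x : ℝ} (hx : x ∈ s) :
    HasDerivAt (iteratedDeriv n f) (iteratedDeriv (n + 1) f x) x := by
  rw [iteratedDeriv_succ]
  refine DifferentiableAt.hasDerivAt ?_
  have h := (hf.differentiableOn_iteratedDerivWithin (m := n)
    (by exact_mod_cast WithTop.coe_lt_top _) hs.uniqueDiffOn).differentiableAt (hs.mem_nhds hx)
  exact h.congr_of_eventuallyEq
    (Filter.eventuallyEq_of_mem (hs.mem_nhds hx) (iteratedDerivWithin_of_isOpen hs).symm)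

/-- A function vanishing on an open set has vanishing derivative there. -/
lemma hasDerivAt_eq_zero_of_eqOn {F : ℝ → ℝ} {s : Set ℝ} (hs : IsOpen s)
    (hF : ∀ x ∈ s, F x = 0) {x F' : ℝ} (hx : x ∈ s) (h : HasDerivAt F F' x) : F' = 0 :=
  h.unique ((hasDerivAt_const x (0 : ℝ)).congr_of_eventuallyEq
    (Filter.eventuallyEq_of_mem (hs.mem_nhds hx) hF))

/-- The low-order Taylor coefficients at `0` of a solution of the second-order equation. -/
lemma iteratedDeriv_of_ode {k₁ k₂ k₃ r : ℝ} {φ : ℝ → ℝ} (hr : 0 < r)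
    (hφ : ContDiffOn ℝ (⊤ : ℕ∞) φ (Ioo (-r) r)) (hφ0 : φ 0 = 1)
    (hode : ∀ s ∈ Ioo (-r) r,
      (1 + (k₁ + k₃) * s ^ 2 + k₂ * s ^ 4) * deriv (deriv φ) s
        = (k₁ + k₂ * s ^ 2) * (φ s - s * deriv φ s)) :
    iteratedDeriv 2 φ 0 = k₁ ∧ iteratedDeriv 3 φ 0 = 0 ∧
      iteratedDeriv 4 φ 0 = 2 * k₂ - 3 * k₁ ^ 2 - 2 * k₁ * k₃ := by
  have h0 : (0 : ℝ) ∈ Ioo (-r) r := ⟨by linarith, hr⟩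
  have D := fun n {x : ℝ} (hx : x ∈ Ioo (-r) r) => hasDerivAt_iteratedDeriv isOpen_Ioo hφ n hx
  have e0 : ∀ s ∈ Ioo (-r) r, (1 + (k₁ + k₃) * s ^ 2 + k₂ * s ^ 4) * iteratedDeriv 2 φ s
      - (k₁ + k₂ * s ^ 2) * (iteratedDeriv 0 φ s - s * iteratedDeriv 1 φ s) = 0 := by
    intro s hs
    have := hode s hs
    rw [iteratedDeriv_succ, iteratedDeriv_one, iteratedDeriv_zero]
    linarith
  have e1 : ∀ s ∈ Ioo (-r) r,
      (1 + (k₁ + k₃) * s ^ 2 + k₂ * s ^ 4) * iteratedDeriv 3 φ s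
        + (2 * (k₁ + k₃) * s + 4 * k₂ * s ^ 3) * iteratedDeriv 2 φ s
        - 2 * k₂ * s * (iteratedDeriv 0 φ s - s * iteratedDeriv 1 φ s)
        + (k₁ * s + k₂ * s ^ 3) * iteratedDeriv 2 φ s = 0 := by
    intro s hs
    have hP : HasDerivAt (fun s : ℝ => 1 + (k₁ + k₃) * s ^ 2 + k₂ * s ^ 4)
        ((k₁ + k₃) * (2 * s) + k₂ * (4 * s ^ 3)) s := by
      simpa using (((hasDerivAt_pow 2 s).const_mul (k₁ + k₃)).const_add 1).fun_add
        ((hasDerivAt_pow 4 s).const_mul k₂)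
    have hQ : HasDerivAt (fun s : ℝ => k₁ + k₂ * s ^ 2) (k₂ * (2 * s)) s := by
      simpa using ((hasDerivAt_pow 2 s).const_mul k₂).const_add k₁
    have := hasDerivAt_eq_zero_of_eqOn isOpen_Ioo e0 hs
      ((hP.mul (D 2 hs)).sub (hQ.mul ((D 0 hs).sub ((hasDerivAt_id s).mul (D 1 hs)))))
    simp only [id, zero_add, Nat.reduceAdd] at this
    linear_combination this
  have e2 : iteratedDeriv 4 φ 0 + (2 * (k₁ + k₃)) * iteratedDeriv 2 φ 0
        - 2 * k₂ * iteratedDeriv 0 φ 0 + k₁ * iteratedDeriv 2 φ 0 = 0 := by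
    have hP : HasDerivAt (fun s : ℝ => 1 + (k₁ + k₃) * s ^ 2 + k₂ * s ^ 4) 0 0 := by
      simpa using (((hasDerivAt_pow 2 (0 : ℝ)).const_mul (k₁ + k₃)).const_add 1).fun_add
        ((hasDerivAt_pow 4 (0 : ℝ)).const_mul k₂)
    have hQ : HasDerivAt (fun s : ℝ => 2 * (k₁ + k₃) * s + 4 * k₂ * s ^ 3) (2 * (k₁ + k₃)) 0 := by
      simpa using ((hasDerivAt_id (0 : ℝ)).const_mul (2 * (k₁ + k₃))).fun_add
        ((hasDerivAt_pow 3 (0 : ℝ)).const_mul (4 * k₂))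
    have hR : HasDerivAt (fun s : ℝ => 2 * k₂ * s) (2 * k₂) 0 := by
      simpa using (hasDerivAt_id (0 : ℝ)).const_mul (2 * k₂)
    have hS : HasDerivAt (fun s : ℝ => k₁ * s + k₂ * s ^ 3) k₁ 0 := by
      simpa using ((hasDerivAt_id (0 : ℝ)).const_mul k₁).fun_add
        ((hasDerivAt_pow 3 (0 : ℝ)).const_mul k₂)
    have := hasDerivAt_eq_zero_of_eqOn isOpen_Ioo e1 h0
      ((((hP.mul (D 3 h0)).add (hQ.mul (D 2 h0))).sub
        (hR.mul ((D 0 h0).sub ((hasDerivAt_id (0 : ℝ)).mul (D 1 h0))))).add (hS.mul (D 2 h0)))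
    simp only [id, zero_add, Nat.reduceAdd, Pi.mul_apply, Pi.sub_apply] at this
    linear_combination this
  have z0 := e0 0 h0
  have z1 := e1 0 h0
  simp only [iteratedDeriv_zero, hφ0] at z0 e2
  have a2 : iteratedDeriv 2 φ 0 = k₁ := by linear_combination z0
  refine ⟨a2, by linear_combination z1, ?_⟩
  rw [a2] at e2
  linear_combination e2

/-- The factor multiplying `φ` in the integrand of `Lone`, as a function of `B`. -/
noncomputable def lengthWeight (k₁ k₂ k₃ x : ℝ) : ℝ :=
  (Real.sqrt (1 + (k₁ + k₃) * x + k₂ * x ^ 2) * Real.exp (sigmaFn k₁ k₂ k₃ x))⁻¹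

lemma lengthWeight_zero (k₁ k₂ k₃ : ℝ) : lengthWeight k₁ k₂ k₃ 0 = 1 := by
  simp [lengthWeight, sigmaFn]

lemma exists_radius_quadratic_pos (a b : ℝ) :
    ∃ r > 0, ∀ x ∈ Ioo (-r) r, 0 < 1 + a * x + b * x ^ 2 := by
  have hc : ContinuousAt (fun x : ℝ => 1 + a * x + b * x ^ 2) 0 := by fun_prop
  have hev : ∀ᶠ x in 𝓝 (0 : ℝ), 0 < 1 + a * x + b * x ^ 2 :=
    hc.eventually (lt_mem_nhds (by norm_num))
  obtain ⟨r, hr, h⟩ := Metric.eventually_nhds_iff.1 hev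
  exact ⟨r, hr, fun x hx => h (by rw [Real.dist_eq, sub_zero]; exact abs_lt.2 hx)⟩

section Weight

variable {k₁ k₂ k₃ r : ℝ}

lemma contDiffOn_sigmaFn_deriv (hP : ∀ x ∈ Ioo (-r) r, 0 < 1 + (k₁ + k₃) * x + k₂ * x ^ 2) :
    ContDiffOn ℝ (⊤ : ℕ∞)
      (fun x : ℝ => (k₂ * x + k₃) / (1 + (k₁ + k₃) * x + k₂ * x ^ 2)) (Ioo (-r) r) :=
  ContDiffOn.div (by fun_prop) (by fun_prop) fun x hx => (hP x hx).ne'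

lemma hasDerivAt_sigmaFn (hr : 0 < r)
    (hP : ∀ x ∈ Ioo (-r) r, 0 < 1 + (k₁ + k₃) * x + k₂ * x ^ 2) {x : ℝ} (hx : x ∈ Ioo (-r) r) :
    HasDerivAt (sigmaFn k₁ k₂ k₃)
      (1 / 2 * ((k₂ * x + k₃) / (1 + (k₁ + k₃) * x + k₂ * x ^ 2))) x := by
  have hc := (contDiffOn_sigmaFn_deriv hP).continuousOn
  have h0 : (0 : ℝ) ∈ Ioo (-r) r := ⟨by linarith, hr⟩
  refine (intervalIntegral.integral_hasDerivAt_right ?_ ?_ ?_).const_mul (1 / 2 : ℝ)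
  · exact (hc.mono (ordConnected_Ioo.uIcc_subset h0 hx)).intervalIntegrable
  · exact hc.stronglyMeasurableAtFilter isOpen_Ioo x hx
  · exact hc.continuousAt (isOpen_Ioo.mem_nhds hx)

lemma contDiffOn_lengthWeight (hr : 0 < r)
    (hP : ∀ x ∈ Ioo (-r) r, 0 < 1 + (k₁ + k₃) * x + k₂ * x ^ 2) :
    ContDiffOn ℝ (⊤ : ℕ∞) (lengthWeight k₁ k₂ k₃) (Ioo (-r) r) := by
  have hσ : ContDiffOn ℝ (⊤ : ℕ∞) (sigmaFn k₁ k₂ k₃) (Ioo (-r) r) := by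
    rw [contDiffOn_infty_iff_deriv_of_isOpen isOpen_Ioo]
    refine ⟨fun x hx => (hasDerivAt_sigmaFn hr hP hx).differentiableAt.differentiableWithinAt, ?_⟩
    exact (contDiffOn_const.mul (contDiffOn_sigmaFn_deriv hP)).congr
      fun x hx => (hasDerivAt_sigmaFn hr hP hx).deriv
  refine ContDiffOn.inv (ContDiffOn.mul (ContDiffOn.sqrt (by fun_prop)
    fun x hx => (hP x hx).ne') hσ.exp) fun x hx => ?_
  have := Real.sqrt_pos.2 (hP x hx)
  positivity

lemma lengthWeight_ode (hr : 0 < r)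
    (hP : ∀ x ∈ Ioo (-r) r, 0 < 1 + (k₁ + k₃) * x + k₂ * x ^ 2) {x : ℝ} (hx : x ∈ Ioo (-r) r) :
    (1 + (k₁ + k₃) * x + k₂ * x ^ 2) * deriv (lengthWeight k₁ k₂ k₃) x
      + 1 / 2 * (k₁ + 2 * k₃ + 3 * k₂ * x) * lengthWeight k₁ k₂ k₃ x = 0 := by
  have hpos := hP x hx
  have hq : HasDerivAt (fun x : ℝ => 1 + (k₁ + k₃) * x + k₂ * x ^ 2)
      ((k₁ + k₃) + k₂ * (2 * x)) x := by
    simpa using (((hasDerivAt_id x).const_mul (k₁ + k₃)).const_add 1).fun_add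
      ((hasDerivAt_pow 2 x).const_mul k₂)
  have hS := Real.sqrt_pos.2 hpos
  have hE := Real.exp_pos (sigmaFn k₁ k₂ k₃ x)
  have hd := ((hq.sqrt hpos.ne').mul (hasDerivAt_sigmaFn hr hP hx).exp).inv
    (mul_pos hS hE).ne'
  have hd' : deriv (lengthWeight k₁ k₂ k₃) x = _ := hd.deriv
  rw [hd', lengthWeight]
  have hsq := Real.sq_sqrt hpos.le
  simp only [Pi.mul_apply]
  set S := Real.sqrt (1 + (k₁ + k₃) * x + k₂ * x ^ 2)
  rw [← hsq]
  field_simp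
  ring

/-- The first two derivatives of the weight at `0`. -/
lemma iteratedDeriv_lengthWeight (hr : 0 < r)
    (hP : ∀ x ∈ Ioo (-r) r, 0 < 1 + (k₁ + k₃) * x + k₂ * x ^ 2) :
    iteratedDeriv 1 (lengthWeight k₁ k₂ k₃) 0 = -(k₁ + 2 * k₃) / 2 ∧
      iteratedDeriv 2 (lengthWeight k₁ k₂ k₃) 0
        = (k₁ + k₃ + (k₁ + 2 * k₃) / 2) * ((k₁ + 2 * k₃) / 2) - 3 / 2 * k₂ := by
  have h0 : (0 : ℝ) ∈ Ioo (-r) r := ⟨by linarith, hr⟩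
  have D := fun n => hasDerivAt_iteratedDeriv isOpen_Ioo (contDiffOn_lengthWeight hr hP) n h0
  have e0 : ∀ x ∈ Ioo (-r) r,
      (1 + (k₁ + k₃) * x + k₂ * x ^ 2) * iteratedDeriv 1 (lengthWeight k₁ k₂ k₃) x
      + 1 / 2 * (k₁ + 2 * k₃ + 3 * k₂ * x) * iteratedDeriv 0 (lengthWeight k₁ k₂ k₃) x = 0 := by
    intro x hx
    rw [iteratedDeriv_one, iteratedDeriv_zero]
    exact lengthWeight_ode hr hP hx
  have hq : HasDerivAt (fun x : ℝ => 1 + (k₁ + k₃) * x + k₂ * x ^ 2) (k₁ + k₃) 0 := by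
    simpa using (((hasDerivAt_id (0 : ℝ)).const_mul (k₁ + k₃)).const_add 1).fun_add
      ((hasDerivAt_pow 2 (0 : ℝ)).const_mul k₂)
  have hl : HasDerivAt (fun x : ℝ => 1 / 2 * (k₁ + 2 * k₃ + 3 * k₂ * x)) (1 / 2 * (3 * k₂)) 0 := by
    simpa using (((hasDerivAt_id (0 : ℝ)).const_mul (3 * k₂)).const_add
      (k₁ + 2 * k₃)).const_mul (1 / 2 : ℝ)
  have e1 := hasDerivAt_eq_zero_of_eqOn isOpen_Ioo e0 h0 ((hq.mul (D 1)).add (hl.mul (D 0)))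
  have z0 := e0 0 h0
  simp only [iteratedDeriv_zero, lengthWeight_zero, zero_add, Nat.reduceAdd] at z0 e1
  have a1 : iteratedDeriv 1 (lengthWeight k₁ k₂ k₃) 0 = -(k₁ + 2 * k₃) / 2 := by
    linear_combination z0
  refine ⟨a1, ?_⟩
  rw [a1] at e1
  linear_combination e1

end Weight

/-- Expansion of the integrand of `Lone` in `s = -2μ⁻¹δ sin(√μ t)`. -/
lemma integrand_expansion {k₁ k₂ k₃ r : ℝ} {φ : ℝ → ℝ} (hr : 0 < r)
    (hφ : ContDiffOn ℝ (⊤ : ℕ∞) φ (Ioo (-r) r)) (hφ0 : φ 0 = 1)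
    (hode : ∀ s ∈ Ioo (-r) r,
      (1 + (k₁ + k₃) * s ^ 2 + k₂ * s ^ 4) * deriv (deriv φ) s
        = (k₁ + k₂ * s ^ 2) * (φ s - s * deriv φ s)) :
    ∃ c₁ c₃ c₅ : ℝ, (fun s => φ s * lengthWeight k₁ k₂ k₃ (s ^ 2) -
      (1 + c₁ * s - k₃ * s ^ 2 + c₃ * s ^ 3
        + (3 * k₃ ^ 2 + 2 * k₁ * k₃ - 2 * k₂) / 3 * s ^ 4 + c₅ * s ^ 5))
      =O[𝓝 0] fun s => s ^ 6 := by
  obtain ⟨ρ, hρ, hP⟩ := exists_radius_quadratic_pos (k₁ + k₃) k₂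
  obtain ⟨b2, b3, b4⟩ := iteratedDeriv_of_ode hr hφ hφ0 hode
  obtain ⟨w1, w2⟩ := iteratedDeriv_lengthWeight hρ hP
  have hW := contDiffOn_lengthWeight hρ hP
  have Tφ := taylor_isBigO hr hφ 6
  have hsq : Filter.Tendsto (fun s : ℝ => s ^ 2) (𝓝 0) (𝓝 0) := by
    simpa using (continuous_pow 2).tendsto (0 : ℝ)
  have TW := (taylor_isBigO hρ hW 3).comp_tendsto hsq
  simp only [Finset.sum_range_succ, Finset.sum_range_zero, b2, b3, b4, w1, w2, iteratedDeriv_zero,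
    hφ0, lengthWeight_zero, Function.comp_def, ← pow_mul, Nat.reduceMul] at Tφ TW
  generalize iteratedDeriv 1 φ 0 = β at Tφ
  generalize iteratedDeriv 5 φ 0 = γ at Tφ
  have hW1 : (fun s : ℝ => lengthWeight k₁ k₂ k₃ (s ^ 2)) =O[𝓝 0] fun _ => (1 : ℝ) := by
    have hc : ContinuousAt (lengthWeight k₁ k₂ k₃) 0 :=
      hW.continuousOn.continuousAt (Ioo_mem_nhds (by linarith) hρ)
    exact (hc.tendsto.comp hsq).isBigO_one ℝ
  have hpoly : ∀ p : ℝ → ℝ, Continuous p → p =O[𝓝 0] fun _ => (1 : ℝ) :=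
    fun p hp => (hp.tendsto 0).isBigO_one ℝ
  norm_num [Nat.factorial] at Tφ TW
  set v₁ : ℝ := -(k₁ + 2 * k₃) / 2 with hv₁
  set v₂ : ℝ := ((k₁ + k₃ + (k₁ + 2 * k₃) / 2) * ((k₁ + 2 * k₃) / 2) - 3 / 2 * k₂) / 2 with hv₂
  set p₄ : ℝ := (2 * k₂ - 3 * k₁ ^ 2 - 2 * k₁ * k₃) / 24 with hp₄
  have A := Tφ.mul hW1
  have B := (hpoly (fun s => 1 + β * s + k₁ / 2 * s ^ 2 + p₄ * s ^ 4 + γ / 120 * s ^ 5)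
    (by fun_prop)).mul TW
  have E := (isBigO_refl (fun s : ℝ => s ^ 6) (𝓝 0)).mul
    (hpoly (fun s => (k₁ / 2 * v₂ + p₄ * v₁) + γ / 120 * v₁ * s + p₄ * v₂ * s ^ 2
      + γ / 120 * v₂ * s ^ 3) (by fun_prop))
  simp only [mul_one, one_mul] at A B E
  refine ⟨β, β * v₁, γ / 120 + β * v₂, ((A.add B).add E).congr_left fun s => ?_⟩
  simp only [hv₁, hv₂, hp₄]
  ring

lemma integral_sin_mul_two_pi_pow {ω : ℝ} (hω : 0 < ω) (n : ℕ) :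
    ∫ t in (0 : ℝ)..(2 * Real.pi / ω), Real.sin (ω * t) ^ n
      = ω⁻¹ * ∫ u in (0 : ℝ)..(2 * Real.pi), Real.sin u ^ n := by
  rw [intervalIntegral.integral_comp_mul_left (fun u => Real.sin u ^ n) hω.ne', mul_zero,
    mul_div_cancel₀ _ hω.ne', smul_eq_mul]

/-- The integral over a period of a quintic polynomial in `κ sin(ωt)`. -/
lemma integral_quintic_sin {ω : ℝ} (hω : 0 < ω) (a₀ a₁ a₂ a₃ a₄ a₅ κ : ℝ) :
    ∫ t in (0 : ℝ)..(2 * Real.pi / ω),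
      (a₀ + a₁ * (κ * Real.sin (ω * t)) + a₂ * (κ * Real.sin (ω * t)) ^ 2
        + a₃ * (κ * Real.sin (ω * t)) ^ 3 + a₄ * (κ * Real.sin (ω * t)) ^ 4
        + a₅ * (κ * Real.sin (ω * t)) ^ 5)
      = (2 * Real.pi * a₀ + Real.pi * κ ^ 2 * a₂ + 3 / 4 * Real.pi * κ ^ 4 * a₄) / ω := by
  have hi : ∀ (c : ℝ) (n : ℕ), IntervalIntegrable (fun t => c * Real.sin (ω * t) ^ n)
      MeasureTheory.volume 0 (2 * Real.pi / ω) :=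
    fun c n => Continuous.intervalIntegrable (by fun_prop) _ _
  have key : ∀ t, (a₀ + a₁ * (κ * Real.sin (ω * t)) + a₂ * (κ * Real.sin (ω * t)) ^ 2
        + a₃ * (κ * Real.sin (ω * t)) ^ 3 + a₄ * (κ * Real.sin (ω * t)) ^ 4
        + a₅ * (κ * Real.sin (ω * t)) ^ 5)
      = ∑ n : Fin 6, (![a₀, a₁, a₂, a₃, a₄, a₅] n * κ ^ (n : ℕ)) * Real.sin (ω * t) ^ (n : ℕ) := by
    intro t
    simp [Fin.sum_univ_succ]
    ring
  simp only [key]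
  rw [intervalIntegral.integral_finsetSum fun n _ => hi _ _]
  simp only [intervalIntegral.integral_const_mul, integral_sin_mul_two_pi_pow hω]
  have s0 : ∫ u in (0 : ℝ)..(2 * Real.pi), Real.sin u ^ 0 = 2 * Real.pi := by simp
  have s1 : ∫ u in (0 : ℝ)..(2 * Real.pi), Real.sin u ^ 1 = 0 := by simp
  have step : ∀ n : ℕ, ∫ u in (0 : ℝ)..(2 * Real.pi), Real.sin u ^ (n + 2)
      = (n + 1) / (n + 2) * (∫ u in (0 : ℝ)..(2 * Real.pi), Real.sin u ^ n) := by
    intro n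
    rw [integral_sin_pow]
    simp
  have s2 := step 0
  have s3 := step 1
  have s4 := step 2
  have s5 := step 3
  simp only [zero_add, Nat.reduceAdd] at s2 s3 s4 s5
  rw [s0] at s2
  rw [s1] at s3
  rw [s2] at s4
  rw [s3] at s5
  simp only [Fin.sum_univ_six, Fin.coe_ofNat_eq_mod]
  have m2 : ![a₀, a₁, a₂, a₃, a₄, a₅] 2 = a₂ := rfl
  have m4 : ![a₀, a₁, a₂, a₃, a₄, a₅] 4 = a₄ := rfl
  norm_num [s0, s1, s2, s3, s4, s5, m2, m4]
  field_simp

/-- If `G` agrees with `Q` up to `O(s⁶)`, then the integral over a period of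
`G(κδ sin(ωt))` agrees with that of `Q(κδ sin(ωt))` up to `O(δ⁶)`. -/
lemma integral_sin_sub_isBigO {G Q : ℝ → ℝ} {r κ ω : ℝ} (hr : 0 < r)
    (hG : ContinuousOn G (Ioo (-r) r)) (hQ : Continuous Q)
    (h : (fun s => G s - Q s) =O[𝓝 0] fun s => s ^ 6) :
    (fun δ : ℝ => (∫ t in (0 : ℝ)..(2 * Real.pi / ω), G (κ * δ * Real.sin (ω * t)))
      - ∫ t in (0 : ℝ)..(2 * Real.pi / ω), Q (κ * δ * Real.sin (ω * t)))
      =O[𝓝 0] fun δ => δ ^ 6 := by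
  obtain ⟨C, hC, hb⟩ := h.exists_pos
  obtain ⟨ρ, hρ, hb⟩ := Metric.eventually_nhds_iff.1 hb.bound
  have hsmall : ∀ᶠ δ in 𝓝 (0 : ℝ), |κ * δ| < min r ρ := by
    have hc : ContinuousAt (fun δ : ℝ => |κ * δ|) 0 := by fun_prop
    exact hc.eventually (gt_mem_nhds (by simpa using ⟨hr, hρ⟩))
  refine IsBigO.of_bound (C * |κ| ^ 6 * |2 * Real.pi / ω - 0|) ?_
  filter_upwards [hsmall] with δ hδ
  obtain ⟨hδr, hδρ⟩ := lt_min_iff.1 hδ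
  have hs : ∀ t, |κ * δ * Real.sin (ω * t)| ≤ |κ * δ| := fun t => by
    rw [abs_mul]
    exact mul_le_of_le_one_right (abs_nonneg _) (Real.abs_sin_le_one _)
  have hGi : Continuous fun t => G (κ * δ * Real.sin (ω * t)) :=
    hG.comp_continuous (by fun_prop) fun t => abs_lt.1 ((hs t).trans_lt hδr)
  rw [← intervalIntegral.integral_sub (hGi.intervalIntegrable _ _)
    (Continuous.intervalIntegrable (by fun_prop) _ _)]
  have hbd := intervalIntegral.norm_integral_le_of_norm_le_const (a := 0) (b := 2 * Real.pi / ω)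
    (f := fun t => G (κ * δ * Real.sin (ω * t)) - Q (κ * δ * Real.sin (ω * t)))
    (C := C * |κ * δ| ^ 6) fun t _ => by
      refine (hb (by rw [Real.dist_eq, sub_zero]; exact (hs t).trans_lt hδρ)).trans ?_
      rw [norm_pow, Real.norm_eq_abs]
      exact mul_le_mul_of_nonneg_left (pow_le_pow_left₀ (abs_nonneg _) (hs t) 6) hC.le
  refine hbd.trans_eq ?_
  rw [norm_pow, Real.norm_eq_abs, abs_mul]
  ring

/-- as `δ → 0⁺`,
`L₁(δ) = 2π/√μ - (4k₃π/(μ²√μ))δ² + (4(3k₃²+2k₁k₃-2k₂)π/(μ⁴√μ))δ⁴ + O(δ⁶)`. -/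
theorem stmt_10 (k₁ k₂ k₃ μ ε : ℝ) (hμ : 0 < μ) (hε : 0 < ε)
    (hf : ∀ θ : ℝ, 0 ≤ θ → θ < ε → 0 < 1 + (k₁ + k₃) * θ + k₂ * θ ^ 2)
    (φ : ℝ → ℝ) (εφ : ℝ) (hεφ : 0 < εφ)
    (hsmooth : ContDiffOn ℝ (⊤ : ℕ∞) φ (Ioo (-εφ) εφ))
    (hφ0 : φ 0 = 1)
    (hode : ∀ s ∈ Ioo (-εφ) εφ,
      (1 + (k₁ + k₃) * s ^ 2 + k₂ * s ^ 4) * deriv (deriv φ) s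
        = (k₁ + k₂ * s ^ 2) * (φ s - s * deriv φ s)) :
    (fun δ : ℝ => Lone k₁ k₂ k₃ μ φ δ -
        (2 * Real.pi / Real.sqrt μ
          - 4 * k₃ * Real.pi / (μ ^ 2 * Real.sqrt μ) * δ ^ 2
          + 4 * (3 * k₃ ^ 2 + 2 * k₁ * k₃ - 2 * k₂) * Real.pi / (μ ^ 4 * Real.sqrt μ) * δ ^ 4))
      =O[𝓝[>] (0:ℝ)] (fun δ : ℝ => δ ^ 6) := by
  obtain ⟨c₁, c₃, c₅, hexp⟩ := integrand_expansion hεφ hsmooth hφ0 hode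
  obtain ⟨ρ, hρ, hP⟩ := exists_radius_quadratic_pos (k₁ + k₃) k₂
  have hω := Real.sqrt_pos.2 hμ
  have hr : 0 < min εφ (min ρ 1) := by positivity
  have hG : ContinuousOn (fun s => φ s * lengthWeight k₁ k₂ k₃ (s ^ 2))
      (Ioo (-min εφ (min ρ 1)) (min εφ (min ρ 1))) := by
    refine (hsmooth.continuousOn.mono ?_).mul
      ((contDiffOn_lengthWeight hρ hP).continuousOn.comp (by fun_prop) ?_)
    · exact Ioo_subset_Ioo (neg_le_neg (min_le_left _ _)) (min_le_left _ _)
    · intro s hs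
      have hs' := abs_lt.2 hs
      rw [lt_min_iff, lt_min_iff] at hs'
      have h2 : s ^ 2 < ρ := by
        rw [← sq_abs]
        nlinarith [abs_nonneg s]
      exact ⟨by nlinarith [sq_nonneg s], h2⟩
  have hmain := (integral_sin_sub_isBigO (κ := -2 * μ⁻¹) (ω := Real.sqrt μ) hr hG (by fun_prop)
    hexp).mono (nhdsWithin_le_nhds (s := Ioi (0 : ℝ)))
  refine hmain.congr_left fun δ => ?_
  have hL : Lone k₁ k₂ k₃ μ φ δ = ∫ t in (0 : ℝ)..(2 * Real.pi / Real.sqrt μ),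
      φ (-2 * μ⁻¹ * δ * Real.sin (Real.sqrt μ * t)) *
        lengthWeight k₁ k₂ k₃ ((-2 * μ⁻¹ * δ * Real.sin (Real.sqrt μ * t)) ^ 2) := by
    rw [Lone]
    congr 1 with t
    have hB : Bfn μ δ t = (-2 * μ⁻¹ * δ * Real.sin (Real.sqrt μ * t)) ^ 2 := by
      rw [Bfn]
      ring
    rw [hB, lengthWeight, div_eq_mul_inv]
  have hQ := integral_quintic_sin hω 1 c₁ (-k₃) c₃
    ((3 * k₃ ^ 2 + 2 * k₁ * k₃ - 2 * k₂) / 3) c₅ (-2 * μ⁻¹ * δ)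
  simp only [neg_mul k₃, ← sub_eq_add_neg] at hQ
  rw [hL, hQ]
  field_simp
  ring
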